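/- Let Φ ∈ ENT, let η ∈ C_c²((0,∞);ℝ) with η(1) = 1, and define on ℝ²∖{0}: Φ̂(re^{iθ}) = η(r)Φ(e^{iθ}), λ(e^{iθ}) = (d/dθ)Φ(e^{iθ})·(i e^{iθ}), and Ψ(re^{iθ}) = (η(r)/(2r²)) λ(e^{iθ}) e^{iθ} − (η'(r)/(2r)) Φ(e^{iθ}). Then for every open Ω ⊂ ℝ² and every u ∈ C¹(Ω; ℝ²∖{0}) with div u = 0 on Ω, the identity div(Φ̂∘u) = (Ψ∘u)·∇(1 − |u|²) holds pointwise on Ω. -/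

import Mathlib

open MeasureTheory Metric Filter Set Bornology
open scoped ENNReal NNReal Topology Real

noncomputable section

namespace Eikonal

/-! ### Basic geometric objects on `ℝ² ≃ ℂ` -/

/-- The point `e^{iθ}` of the unit circle, viewed as a complex number. -/
def circ (θ : ℝ) : ℂ := Complex.exp (θ * Complex.I)

/-- The real scalar product of `ℝ² ≃ ℂ`. -/
def dotR (z w : ℂ) : ℝ := z.re * w.re + z.im * w.im

/-- Smooth compactly supported test functions in the open set `Ω`. -/
def TestFun (Ω : Set ℂ) (ζ : ℂ → ℝ) : Prop :=
  ContDiff ℝ (⊤ : ℕ∞) ζ ∧ HasCompactSupport ζ ∧ tsupport ζ ⊆ Ω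

/-- `C¹` compactly supported test functions in `Ω`. -/
def TestFun1 (Ω : Set ℂ) (ζ : ℂ → ℝ) : Prop :=
  ContDiff ℝ 1 ζ ∧ HasCompactSupport ζ ∧ tsupport ζ ⊆ Ω

/-- `div m = 0` in the sense of distributions on `Ω`:
`∫_Ω m·∇ζ = 0` for all test functions `ζ`, where `m·∇ζ (x) = Dζ(x)[m x]`. -/
def DivFree (Ω : Set ℂ) (m : ℂ → ℂ) : Prop :=
  ∀ ζ : ℂ → ℝ, TestFun Ω ζ → (∫ x in Ω, fderiv ℝ ζ x (m x)) = 0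

/-- Weak solution of the eikonal equation on `Ω` : `|m| = 1` a.e. and `div m = 0` in `𝒟'(Ω)`. -/
def EikonalSol (Ω : Set ℂ) (m : ℂ → ℂ) : Prop :=
  AEStronglyMeasurable m (volume.restrict Ω) ∧
    (∀ᵐ x ∂(volume.restrict Ω), ‖m x‖ = 1) ∧ DivFree Ω m

/-! ### Besov seminorms (finite–difference characterization), with values in `ℝ≥0∞` -/

/-- The Besov seminorm `|m|_{B^s_{p,∞}(Ω)} = sup_{h ≠ 0} |h|^{-s} ‖m(·+h) - m‖_{L^p(Ω ∩ (Ω-h))}`. -/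
def besovE (Ω : Set ℂ) (p s : ℝ) (m : ℂ → ℂ) : ℝ≥0∞ :=
  ⨆ h : {h : ℂ // h ≠ 0},
    (‖h.1‖₊ : ℝ≥0∞) ^ (-s) *
      (∫⁻ x in Ω ∩ {x | x + h.1 ∈ Ω}, (‖m (x + h.1) - m x‖₊ : ℝ≥0∞) ^ p) ^ (1/p)

/-- The `L^p(Ω)` norm, with values in `ℝ≥0∞`. -/
def LpE (Ω : Set ℂ) (p : ℝ) (m : ℂ → ℂ) : ℝ≥0∞ :=
  (∫⁻ x in Ω, (‖m x‖₊ : ℝ≥0∞) ^ p) ^ (1/p)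

/-- The Besov norm `‖m‖_{B^s_{p,∞}(Ω)} = ‖m‖_{L^p(Ω)} + |m|_{B^s_{p,∞}(Ω)}`. -/
def besovNormE (Ω : Set ℂ) (p s : ℝ) (m : ℂ → ℂ) : ℝ≥0∞ := LpE Ω p m + besovE Ω p s m

/-! ### Entropies -/

/-- `Φ ∈ ENT`, recorded through the angular parametrization `θ ↦ Φ(e^{iθ})` together with its
derivative `φ'` : the derivative exists everywhere, is Lipschitz (i.e. `Φ ∈ C^{1,1}(S¹)`), and
satisfies the entropy condition `(d/dθ) Φ(e^{iθ}) · e^{iθ} = 0`. -/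
def IsEnt (Φ : ℂ → ℂ) (φ' : ℝ → ℂ) : Prop :=
  (∀ θ : ℝ, HasDerivAt (fun t => Φ (circ t)) (φ' θ) θ) ∧
    (∃ L : ℝ≥0, LipschitzWith L φ') ∧
    ∀ θ : ℝ, dotR (φ' θ) (circ θ) = 0

/-- `Φ ∈ ENT` with `‖Φ‖_{C^{1,1}} ≤ 1`. -/
def EntC11Ball (Φ : ℂ → ℂ) : Prop :=
  ∃ φ' : ℝ → ℂ, IsEnt Φ φ' ∧ (∀ θ, ‖Φ (circ θ)‖ ≤ 1) ∧ (∀ θ, ‖φ' θ‖ ≤ 1) ∧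
    LipschitzWith 1 φ'

/-- `Φ ∈ ENT` with `‖Φ‖_{C^{1,α}} ≤ 1`. -/
def EntC1aBall (α : ℝ) (Φ : ℂ → ℂ) : Prop :=
  ∃ φ' : ℝ → ℂ, IsEnt Φ φ' ∧ (∀ θ, ‖Φ (circ θ)‖ ≤ 1) ∧ (∀ θ, ‖φ' θ‖ ≤ 1) ∧
    ∀ θ₁ θ₂ : ℝ, ‖φ' θ₁ - φ' θ₂‖ ≤ |θ₁ - θ₂| ^ α

/-- `Φ ∈ ẼNT`: an entropy whose angular derivative is `π`-antiperiodic
(odd entropies plus constants). -/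
def EntTilde (Φ : ℂ → ℂ) : Prop :=
  ∃ φ' : ℝ → ℂ, IsEnt Φ φ' ∧ ∀ θ : ℝ, φ' (θ + π) = - φ' θ

/-- `Φ ∈ ẼNT` with `‖Φ‖_{C^{1,α}} ≤ 1`. -/
def EntTildeC1aBall (α : ℝ) (Φ : ℂ → ℂ) : Prop :=
  ∃ φ' : ℝ → ℂ, IsEnt Φ φ' ∧ (∀ θ, ‖Φ (circ θ)‖ ≤ 1) ∧ (∀ θ, ‖φ' θ‖ ≤ 1) ∧
    (∀ θ₁ θ₂ : ℝ, ‖φ' θ₁ - φ' θ₂‖ ≤ |θ₁ - θ₂| ^ α) ∧ ∀ θ : ℝ, φ' (θ + π) = - φ' θ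

/-! ### Entropy productions as measures -/

/-- Integral of a function against a signed measure. -/
def sInt {X : Type*} [MeasurableSpace X] (σ : MeasureTheory.SignedMeasure X) (f : X → ℝ) : ℝ :=
  (∫ x, f x ∂σ.toJordanDecomposition.posPart) - ∫ x, f x ∂σ.toJordanDecomposition.negPart

/-- The (finite Radon) signed measure `μ` represents the distribution
`div Φ(m) : ζ ↦ -∫_Ω Φ(m)·∇ζ`. -/
def RepresentsDiv (Ω : Set ℂ) (m Φ : ℂ → ℂ) (μ : MeasureTheory.SignedMeasure ℂ) : Prop :=
  ∀ ζ : ℂ → ℝ, TestFun Ω ζ → -(∫ x in Ω, fderiv ℝ ζ x (Φ (m x))) = sInt μ ζ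

/-- The supremum measure `ν = ⋁ {|div Φ(m)| : Φ ∈ ENT, ‖Φ‖_{C^{1,1}} ≤ 1}`. -/
def entVarC11 (Ω : Set ℂ) (m : ℂ → ℂ) : Measure ℂ :=
  ⨆ Φ : {Φ : ℂ → ℂ // EntC11Ball Φ},
    ⨆ μ : {μ : MeasureTheory.SignedMeasure ℂ // RepresentsDiv Ω m Φ.1 μ}, μ.1.totalVariation

/-- The supremum measure `⋁ {|div Φ(m)| : Φ ∈ ENT, ‖Φ‖_{C^{1,α}} ≤ 1}`. -/
def entVarC1a (α : ℝ) (Ω : Set ℂ) (m : ℂ → ℂ) : Measure ℂ :=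
  ⨆ Φ : {Φ : ℂ → ℂ // EntC1aBall α Φ},
    ⨆ μ : {μ : MeasureTheory.SignedMeasure ℂ // RepresentsDiv Ω m Φ.1 μ}, μ.1.totalVariation

/-- The supremum measure `⋁ {|div Φ(m)| : Φ ∈ ẼNT, ‖Φ‖_{C^{1,α}} ≤ 1}`. -/
def entVarTildeC1a (α : ℝ) (Ω : Set ℂ) (m : ℂ → ℂ) : Measure ℂ :=
  ⨆ Φ : {Φ : ℂ → ℂ // EntTildeC1aBall α Φ},
    ⨆ μ : {μ : MeasureTheory.SignedMeasure ℂ // RepresentsDiv Ω m Φ.1 μ}, μ.1.totalVariation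

/-- The jump set `J_m = {x ∈ Ω : limsup_{r→0} ν(B_r(x))/r > 0}`. -/
def jumpSet (Ω : Set ℂ) (m : ℂ → ℂ) : Set ℂ :=
  {x ∈ Ω | 0 < Filter.limsup
    (fun r : ℝ => entVarC11 Ω m (Metric.ball x r) / ENNReal.ofReal r) (𝓝[>] (0:ℝ))}

/-- A set `J ⊆ ℂ` is (countably) `1`-rectifiable: up to an `H¹`-null set it is covered by
countably many Lipschitz images of `ℝ`. -/
def Rect1 (J : Set ℂ) : Prop :=
  ∃ (f : ℕ → ℝ → ℂ) (K : ℕ → ℝ≥0), (∀ n, LipschitzWith (K n) (f n)) ∧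
    μH[1] (J \ ⋃ n, Set.range (f n)) = 0

/-- `n, m⁺, m⁻` are a measure-theoretic unit normal and one-sided `L¹` traces of `m`
at `H¹`-a.e. point of the jump set `J_m`. -/
def TraceData (Ω : Set ℂ) (m n mp mm : ℂ → ℂ) : Prop :=
  ∀ᵐ x ∂((μH[1] : Measure ℂ).restrict (jumpSet Ω m)),
    ‖n x‖ = 1 ∧ ‖mp x‖ = 1 ∧ ‖mm x‖ = 1 ∧
    Filter.Tendsto
      (fun r : ℝ => (∫ y in Metric.ball x r ∩ {y | 0 < dotR (y - x) (n x)}, ‖m y - mp x‖) / r^2)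
      (𝓝[>] (0:ℝ)) (𝓝 0) ∧
    Filter.Tendsto
      (fun r : ℝ => (∫ y in Metric.ball x r ∩ {y | dotR (y - x) (n x) < 0}, ‖m y - mm x‖) / r^2)
      (𝓝[>] (0:ℝ)) (𝓝 0)

/-- The subset `J_m^δ ⊆ J_m` of jumps of (angular) amplitude larger than `δ`, defined through
trace functions `m⁺ = mp`, `m⁻ = mm`. -/
def Jdelta (Ω : Set ℂ) (m mp mm : ℂ → ℂ) (δ : ℝ) : Set ℂ :=
  {x ∈ jumpSet Ω m | δ < Real.arccos (dotR (mp x) (mm x))}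

/-! ### Mollifiers -/

/-- A mollifier: `ρ ∈ C_c¹(B₁)`, `ρ ≥ 0`, `∫ ρ = 1`, `|∇ρ| ≤ 2`. -/
def Mollifier (ρ : ℂ → ℝ) : Prop :=
  ContDiff ℝ 1 ρ ∧ HasCompactSupport ρ ∧ tsupport ρ ⊆ Metric.ball 0 1 ∧
    (∀ x, 0 ≤ ρ x) ∧ (∫ x, ρ x) = 1 ∧ ∀ x, ‖fderiv ℝ ρ x‖ ≤ 2

/-- The mollification `m_ε = m * ρ_ε`, where `ρ_ε(y) = ε⁻² ρ(y/ε)`. -/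
def mollify (ρ : ℂ → ℝ) (ε : ℝ) (m : ℂ → ℂ) (x : ℂ) : ℂ :=
  ∫ y, ((ε^2)⁻¹ * ρ (ε⁻¹ • y)) • m (x - y)

/-! ### The kinetic formulation -/

/-- `χ(x,s) = 1` if `e^{is}·m(x) > 0` and `0` otherwise. -/
def chi (m : ℂ → ℂ) (x : ℂ) (s : ℝ) : ℝ := if 0 < dotR (circ s) (m x) then 1 else 0

/-- Test functions for the kinetic equation on `Ω × 𝕋` (`𝕋 = ℝ/2πℤ`): smooth, `2π`-periodic in
the kinetic variable, compactly supported inside `Ω` in the space variable. -/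
def KineticTest (Ω : Set ℂ) (φ : ℂ → ℝ → ℝ) : Prop :=
  ContDiff ℝ (⊤ : ℕ∞) (fun p : ℂ × ℝ => φ p.1 p.2) ∧ (∀ x s, φ x (s + 2*π) = φ x s) ∧
    ∃ K : Set ℂ, IsCompact K ∧ K ⊆ Ω ∧ ∀ x ∉ K, ∀ s, φ x s = 0

/-- `σ` is a kinetic measure for `m` : it is a finite signed (Radon) measure on `Ω × 𝕋`
(realized as `Ω × [0,2π)`) such that `e^{is}·∇ₓχ = ∂ₛσ` in `𝒟'(Ω × 𝕋)`. -/
def IsKineticMeasure (Ω : Set ℂ) (m : ℂ → ℂ) (σ : MeasureTheory.SignedMeasure (ℂ × ℝ)) : Prop :=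
  σ.totalVariation (Ω ×ˢ Set.Ico 0 (2*π))ᶜ = 0 ∧
    ∀ φ : ℂ → ℝ → ℝ, KineticTest Ω φ →
      (∫ x in Ω, ∫ s in Set.Ico 0 (2*π), chi m x s * fderiv ℝ (fun y => φ y s) x (circ s))
        = - sInt σ (fun p => deriv (fun s => φ p.1 s) p.2)

/-- `σ` is the kinetic measure of minimal total variation. -/
def IsMinKinetic (Ω : Set ℂ) (m : ℂ → ℂ) (σ : MeasureTheory.SignedMeasure (ℂ × ℝ)) : Prop :=
  IsKineticMeasure Ω m σ ∧
    ∀ σ' : MeasureTheory.SignedMeasure (ℂ × ℝ), IsKineticMeasure Ω m σ' →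
      σ.totalVariation Set.univ ≤ σ'.totalVariation Set.univ

/-- `ν_min = (p_x)_♯ |σ_min|`. -/
def nuMin (σ : MeasureTheory.SignedMeasure (ℂ × ℝ)) : Measure ℂ :=
  σ.totalVariation.map Prod.fst

/-- The entropy `Φ_ψ(z) = ∫_𝕋 1_{e^{is}·z>0} ψ(s) e^{is} ds` associated with `ψ : 𝕋 → ℝ`. -/
def PhiPsi (ψ : ℝ → ℝ) (z : ℂ) : ℂ :=
  ∫ s in Set.Ico 0 (2*π), {s' : ℝ | 0 < dotR (circ s') z}.indicator (fun s' => ψ s' • circ s') s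

/-! ### Lagrangian representations -/

/-- A (candidate) Lagrangian trajectory: a time interval `(tm, tp)`, a spatial component `x`,
a lifted angular component `s`, and the derivative measure `Ds` of `s`. -/
structure Curve where
  tm : ℝ
  tp : ℝ
  x : ℝ → ℂ
  s : ℝ → ℝ
  Ds : MeasureTheory.SignedMeasure ℝ

instance : MeasurableSpace Curve := ⊤

/-- The open time interval of a curve. -/
def Curve.I (γ : Curve) : Set ℝ := Set.Ioo γ.tm γ.tp

/-- A curve is admissible: `0 ≤ tm ≤ tp ≤ T`, `γ_x` Lipschitz with values in `Ω̄`, `γ_s`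
right-continuous of bounded variation with derivative measure `Ds` carried by the time interval. -/
def Curve.Valid (T : ℝ) (Ω : Set ℂ) (γ : Curve) : Prop :=
  0 ≤ γ.tm ∧ γ.tm ≤ γ.tp ∧ γ.tp ≤ T ∧
    (∃ L : ℝ≥0, LipschitzOnWith L γ.x (Set.Icc γ.tm γ.tp)) ∧
    (∀ t ∈ Set.Icc γ.tm γ.tp, γ.x t ∈ closure Ω) ∧
    (∀ t ∈ γ.I, Filter.Tendsto γ.s (𝓝[>] t) (𝓝 (γ.s t))) ∧
    (∀ a ∈ γ.I, ∀ b ∈ γ.I, a ≤ b → γ.s b - γ.s a = γ.Ds (Set.Ioc a b)) ∧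
    γ.Ds.totalVariation γ.Iᶜ = 0

/-- Reduction mod `2π` to `[0, 2π)`. -/
def wrap (s : ℝ) : ℝ := s - 2*π*(⌊s/(2*π)⌋ : ℝ)

/-- The set of atoms of a signed measure on `ℝ`. -/
def atomSet (μ : MeasureTheory.SignedMeasure ℝ) : Set ℝ := {t | μ.totalVariation {t} ≠ 0}

/-- `|D^j v|`: the jump (atomic) part of the total variation of a derivative measure. -/
def jumpTV (μ : MeasureTheory.SignedMeasure ℝ) : Measure ℝ :=
  μ.totalVariation.restrict (atomSet μ)

/-- `|D̃ v|`: the diffuse (continuous) part of the total variation of a derivative measure. -/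
def diffTV (μ : MeasureTheory.SignedMeasure ℝ) : Measure ℝ :=
  μ.totalVariation.restrict (atomSet μ)ᶜ

/-- `ω` is a Lagrangian representation of `m` on `[0,T]`. -/
def IsLagRep (T : ℝ) (Ω : Set ℂ) (m : ℂ → ℂ) (ω : Measure Curve) : Prop :=
  (∀ᵐ γ ∂ω, γ.Valid T Ω) ∧
  (∀ t ∈ Set.Ioo (0:ℝ) T,
    Measure.map (fun γ : Curve => (γ.x t, wrap (γ.s t))) (ω.restrict {γ : Curve | t ∈ γ.I})
      = ((volume.restrict Ω).prod (volume.restrict (Set.Ico 0 (2*π)))).restrict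
          {p : ℂ × ℝ | 0 < dotR (circ p.2) (m p.1)}) ∧
  (∀ᵐ γ ∂ω, ∀ᵐ t ∂(volume.restrict γ.I), HasDerivAt γ.x (circ (γ.s t)) t) ∧
  (∫⁻ γ, γ.Ds.totalVariation Set.univ ∂ω) < ⊤ ∧
  (∀ᵐ γ ∂ω, (0 < γ.tm → γ.x γ.tm ∈ frontier Ω) ∧ (γ.tp < T → γ.x γ.tp ∈ frontier Ω))

/-- `ω` is a minimal Lagrangian representation of `m`, relative to the minimal kinetic
measure `σmin`. -/
def IsMinLagRep (T : ℝ) (Ω : Set ℂ) (m : ℂ → ℂ) (σmin : MeasureTheory.SignedMeasure (ℂ × ℝ))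
    (ω : Measure Curve) : Prop :=
  IsLagRep T Ω m ω ∧
    (∫⁻ γ, γ.Ds.totalVariation Set.univ ∂ω) = ENNReal.ofReal T * σmin.totalVariation Set.univ

/-- A bounded open set of class `C^{1,1}`: near each boundary point, `Ω` is the subgraph of a
`C^{1,1}` function in a suitable orthonormal frame. -/
def C11Domain (Ω : Set ℂ) : Prop :=
  ∀ z ∈ frontier Ω, ∃ (e : ℂ) (r : ℝ) (f f' : ℝ → ℝ) (L : ℝ≥0),
    0 < r ∧ ‖e‖ = 1 ∧ (∀ t, HasDerivAt f (f' t) t) ∧ LipschitzWith L f' ∧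
    ∀ y ∈ Metric.ball z r, (y ∈ Ω ↔ dotR (y - z) e < f (dotR (y - z) (Complex.I * e)))

/-- `x` is a Lebesgue point of `f` with value `c`, with respect to the measure `ρ`. -/
def LebesguePtVal (ρ : Measure ℂ) (f : ℂ → ℝ) (x : ℂ) (c : ℝ) : Prop :=
  f x = c ∧
    Filter.Tendsto
      (fun r : ℝ => (∫⁻ y in Metric.ball x r, ENNReal.ofReal |f y - c| ∂ρ) / ρ (Metric.ball x r))
      (𝓝[>] (0:ℝ)) (𝓝 0)

/-! ## STATEMENT 7 -/

/-!
The divergence of a vector field is the trace of its differential, and the trace of the rank-one map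
`v ↦ ℓ(v) w` is `ℓ(w)`. Write `z = u x = r e^{iθ}`. The differential of `Φ̂` at `z` is a sum of two
rank-one maps, a radial one with values in `ℝ Φ(e^{iθ})` and an angular one with values in
`ℝ (d/dθ)Φ(e^{iθ})`, so that
`div (Φ̂ ∘ u) = (η'(r)/r) ⟪z, Du Φ⟫ + (η(r)/r²) ⟪iz, Du (dΦ/dθ)⟫`.
The entropy condition says that `dΦ/dθ = λ i e^{iθ}` is tangential, which turns the second pairing
into a multiple of `⟪iz, Du (iz)⟫`. Computing the trace of `Du` in the orthogonal frame `(z, iz)`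
trades this for `⟪z, Du z⟫` up to a multiple of `div u`, and `-2 ⟪z, Du v⟫` is the derivative of
`1 - |u|²` in the direction `v`.
-/

open Complex (I arg)
open scoped InnerProductSpace

section ComplexPlane

theorem dotR_eq_inner (z w : ℂ) : dotR z w = ⟪z, w⟫_ℝ := by
  simp only [dotR, Complex.inner, Complex.mul_re, Complex.conj_re, Complex.conj_im]
  ring

theorem norm_circ (θ : ℝ) : ‖circ θ‖ = 1 :=
  Complex.norm_exp_ofReal_mul_I θ

theorem norm_smul_circ_arg (z : ℂ) : ‖z‖ • circ (arg z) = z := by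
  rw [Complex.real_smul, circ, Complex.norm_mul_exp_arg_mul_I]

theorem im_mul_inv_eq_inner (w z : ℂ) : (w * z⁻¹).im = (‖z‖ ^ 2)⁻¹ * ⟪I * z, w⟫_ℝ := by
  simp only [← dotR_eq_inner, dotR, ← Complex.normSq_eq_norm_sq, Complex.mul_im, Complex.mul_re,
    Complex.inv_re, Complex.inv_im, Complex.I_re, Complex.I_im]
  ring

theorem eq_dotR_smul_I_mul_of_dotR_eq_zero {c w : ℂ} (hc : ‖c‖ = 1) (hw : dotR w c = 0) :
    w = dotR w (I * c) • (I * c) := by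
  have hc' : c.re ^ 2 + c.im ^ 2 = 1 := by
    rw [← Complex.sq_norm_sub_sq_re c, hc]; ring
  simp only [dotR] at hw
  apply Complex.ext <;>
    simp only [dotR, Complex.smul_re, Complex.smul_im, Complex.mul_re, Complex.mul_im,
      Complex.I_re, Complex.I_im, smul_eq_mul]
  · linear_combination (-w.re) * hc' + c.re * hw
  · linear_combination (-w.im) * hc' + c.im * hw

theorem trace_smulRight_comp {𝕜 E F : Type*} [NontriviallyNormedField 𝕜]
    [NormedAddCommGroup E] [NormedSpace 𝕜 E] [FiniteDimensional 𝕜 E]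
    [NormedAddCommGroup F] [NormedSpace 𝕜 F] (ℓ : F →L[𝕜] 𝕜) (w : E) (L : E →L[𝕜] F) :
    LinearMap.trace 𝕜 E (ℓ.smulRight w ∘L L) = ℓ (L w) :=
  LinearMap.trace_smulRight (ℓ ∘L L : E →ₗ[𝕜] 𝕜) w

theorem trace_eq_re_add_im (L : ℂ →ₗ[ℝ] ℂ) : L.trace ℝ ℂ = (L 1).re + (L I).im := by
  simp [L.trace_eq_sum_inner Complex.orthonormalBasisOneI, Complex.inner]

theorem inner_map_add_inner_map_I_mul_eq (L : ℂ →ₗ[ℝ] ℂ) (z : ℂ) :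
    ⟪z, L z⟫_ℝ + ⟪I * z, L (I * z)⟫_ℝ = ‖z‖ ^ 2 * L.trace ℝ ℂ := by
  have hL (w : ℂ) : L w = w.re • L 1 + w.im • L I := by
    rw [← map_smul, ← map_smul, ← map_add]
    congr 1
    apply Complex.ext <;> simp
  rw [trace_eq_re_add_im, hL z, hL (I * z), ← Complex.normSq_eq_norm_sq, Complex.normSq_apply]
  simp only [← dotR_eq_inner, dotR, Complex.add_re, Complex.add_im, Complex.smul_re,
    Complex.smul_im, Complex.mul_re, Complex.mul_im, Complex.I_re, Complex.I_im, smul_eq_mul]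
  ring

theorem inner_I_mul_map_of_dotR_circ_arg_eq_zero (L : ℂ →ₗ[ℝ] ℂ) {z w : ℂ}
    (hw : dotR w (circ (arg z)) = 0) :
    ⟪I * z, L w⟫_ℝ =
      dotR w (I * circ (arg z)) * (‖z‖ * L.trace ℝ ℂ - ⟪z, L (circ (arg z))⟫_ℝ) := by
  set c := circ (arg z)
  have hw' : w = dotR w (I * c) • (I * c) := eq_dotR_smul_I_mul_of_dotR_eq_zero (norm_circ _) hw
  have htrace := inner_map_add_inner_map_I_mul_eq L c
  rw [norm_circ, one_pow, one_mul] at htrace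
  have hzc : z = ‖z‖ • c := (norm_smul_circ_arg z).symm
  calc ⟪I * z, L w⟫_ℝ
      = dotR w (I * c) * (‖z‖ * ⟪I * c, L (I * c)⟫_ℝ) := by
        nth_rw 1 [hw', hzc]
        rw [mul_smul_comm, map_smul, real_inner_smul_left, real_inner_smul_right]
        ring
    _ = dotR w (I * c) * (‖z‖ * L.trace ℝ ℂ - ⟪z, L c⟫_ℝ) := by
        nth_rw 3 [hzc]
        rw [real_inner_smul_left, ← htrace]
        ring

end ComplexPlane

section PolarDerivatives

theorem hasFDerivAt_norm_of_ne_zero {F : Type*} [NormedAddCommGroup F] [InnerProductSpace ℝ F]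
    {x : F} (hx : x ≠ 0) : HasFDerivAt (fun y => ‖y‖) (‖x‖⁻¹ • innerSL ℝ x) x := by
  have hsqrt := (hasStrictFDerivAt_norm_sq x).hasFDerivAt.sqrt (by positivity)
  simp only [Real.sqrt_sq (norm_nonneg _)] at hsqrt
  refine hsqrt.congr_fderiv ?_
  ext v
  simp only [one_div, mul_inv_rev, smul_apply, coe_innerSL_apply, nsmul_eq_mul, Nat.cast_ofNat,
    smul_eq_mul]
  field_simp

theorem fderiv_one_sub_norm_sq_apply {E F : Type*} [NormedAddCommGroup E] [NormedSpace ℝ E]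
    [NormedAddCommGroup F] [InnerProductSpace ℝ F] {u : E → F} {x : E}
    (hu : DifferentiableAt ℝ u x) (v : E) :
    fderiv ℝ (fun y => 1 - ‖u y‖ ^ 2) x v = -2 * ⟪u x, fderiv ℝ u x v⟫_ℝ := by
  rw [(hu.hasFDerivAt.norm_sq.const_sub 1).fderiv]
  simp

variable {E : Type*} {φ : ℝ → E} {z w : ℂ}

theorem periodic_comp_arg_eq (hφ : Function.Periodic φ (2 * π)) (hz : z ≠ 0) (hw : w ≠ 0) :
    φ (arg w) = φ (arg z + arg (w / z)) := by
  have hangle : (arg w : Real.Angle) = ((arg z + arg (w / z) : ℝ) : Real.Angle) := by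
    rw [Real.Angle.coe_add, ← Complex.arg_mul_coe_angle hz (div_ne_zero hw hz),
      mul_div_cancel₀ _ hz]
  exact congrArg hφ.lift hangle

-- Measuring the angle from `z` itself keeps the branch cut of `arg` away from `z`.
theorem hasFDerivAt_arg_div (hz : z ≠ 0) :
    HasFDerivAt (fun w => arg (w / z)) ((‖z‖ ^ 2)⁻¹ • innerSL ℝ (I * z)) z := by
  have hlog : HasDerivAt (fun w => Complex.log (w / z)) z⁻¹ z := by
    have hslit : z / z ∈ Complex.slitPlane := by simp [div_self hz]
    simpa [div_self hz] using ((hasDerivAt_id z).div_const z).clog hslit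
  have him := Complex.imCLM.hasFDerivAt.comp z (hlog.hasFDerivAt.restrictScalars ℝ)
  refine (him.congr_fderiv ?_).congr_of_eventuallyEq (.of_forall fun w => (Complex.log_im _).symm)
  exact ContinuousLinearMap.ext fun v => im_mul_inv_eq_inner v z

variable [NormedAddCommGroup E] [NormedSpace ℝ E]

theorem hasFDerivAt_comp_arg {φ' : E} (hφ : HasDerivAt φ φ' (arg z))
    (hper : Function.Periodic φ (2 * π)) (hz : z ≠ 0) :
    HasFDerivAt (fun w => φ (arg w)) (((‖z‖ ^ 2)⁻¹ • innerSL ℝ (I * z)).smulRight φ') z := by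
  have hlift : HasFDerivAt (fun w => φ (arg z + arg (w / z)))
      (((‖z‖ ^ 2)⁻¹ • innerSL ℝ (I * z)).smulRight φ') z := by
    have hφ₀ : HasDerivAt φ φ' (arg z + arg (z / z)) := by simpa [div_self hz] using hφ
    exact hφ₀.hasFDerivAt.comp z ((hasFDerivAt_arg_div hz).const_add (arg z))
  refine hlift.congr_of_eventuallyEq ?_
  filter_upwards [isOpen_ne.mem_nhds hz] with w hw using periodic_comp_arg_eq hper hz hw

/-- The extension `Φ̂(re^{iθ}) = η(r) Φ(e^{iθ})` of a field on the circle, given in the angular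
parametrization `φ θ = Φ(e^{iθ})`. -/
def radialExtension (η : ℝ → ℝ) (φ : ℝ → E) (z : ℂ) : E := η ‖z‖ • φ (arg z)

theorem hasFDerivAt_radialExtension {η : ℝ → ℝ} {η' : ℝ} {φ' : E} (hη : HasDerivAt η η' ‖z‖)
    (hφ : HasDerivAt φ φ' (arg z)) (hper : Function.Periodic φ (2 * π)) (hz : z ≠ 0) :
    HasFDerivAt (radialExtension η φ)
      (((η' / ‖z‖) • innerSL ℝ z).smulRight (φ (arg z)) +
        ((η ‖z‖ / ‖z‖ ^ 2) • innerSL ℝ (I * z)).smulRight φ') z := by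
  have hradial := hη.comp_hasFDerivAt z (hasFDerivAt_norm_of_ne_zero hz)
  refine (hradial.smul (hasFDerivAt_comp_arg hφ hper hz)).congr_fderiv ?_
  rw [add_comm]
  ext v
  simp [div_eq_mul_inv, mul_assoc, smul_smul]

end PolarDerivatives

section EntropyProduction

/-- The divergence of a vector field on `ℝ² ≃ ℂ`; like `fderiv`, it is only meaningful at points of
differentiability. -/
def divergence (v : ℂ → ℂ) (x : ℂ) : ℝ := (fderiv ℝ v x 1).re + (fderiv ℝ v x I).im

/-- The tangential speed `λ(e^{iθ}) = (d/dθ)Φ(e^{iθ}) · (i e^{iθ})` of an entropy whose angular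
derivative is `φ'`. -/
def tangentialSpeed (φ' : ℝ → ℂ) (θ : ℝ) : ℝ := dotR (φ' θ) (I * circ θ)

/-- The field `Ψ(re^{iθ}) = (η(r)/(2r²)) λ(e^{iθ}) e^{iθ} - (η'(r)/(2r)) Φ(e^{iθ})`, whose pairing
with `∇(1 - |u|²)` is the production of the entropy `Φ`. -/
def productionField (η : ℝ → ℝ) (φ φ' : ℝ → ℂ) (z : ℂ) : ℂ :=
  (η ‖z‖ / (2 * ‖z‖ ^ 2) * tangentialSpeed φ' (arg z)) • circ (arg z) -
    (deriv η ‖z‖ / (2 * ‖z‖)) • φ (arg z)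

variable {φ φ' : ℝ → ℂ} {η : ℝ → ℝ} {u : ℂ → ℂ} {x : ℂ}

theorem divergence_eq_trace (v : ℂ → ℂ) (x : ℂ) :
    divergence v x = LinearMap.trace ℝ ℂ (fderiv ℝ v x) :=
  (trace_eq_re_add_im (fderiv ℝ v x : ℂ →ₗ[ℝ] ℂ)).symm

theorem divergence_radialExtension_comp (hη : DifferentiableAt ℝ η ‖u x‖)
    (hφ : HasDerivAt φ (φ' (arg (u x))) (arg (u x))) (hper : Function.Periodic φ (2 * π))
    (hu : DifferentiableAt ℝ u x) (hux : u x ≠ 0) :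
    divergence (radialExtension η φ ∘ u) x =
      deriv η ‖u x‖ / ‖u x‖ * ⟪u x, fderiv ℝ u x (φ (arg (u x)))⟫_ℝ +
        η ‖u x‖ / ‖u x‖ ^ 2 * ⟪I * u x, fderiv ℝ u x (φ' (arg (u x)))⟫_ℝ := by
  have hcomp := (hasFDerivAt_radialExtension hη.hasDerivAt hφ hper hux).comp x hu.hasFDerivAt
  rw [divergence_eq_trace, hcomp.fderiv, ContinuousLinearMap.add_comp,
    ContinuousLinearMap.toLinearMap_add, map_add, trace_smulRight_comp, trace_smulRight_comp]
  rfl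

theorem statement7_general (hφ : HasDerivAt φ (φ' (arg (u x))) (arg (u x)))
    (hper : Function.Periodic φ (2 * π)) (hent : dotR (φ' (arg (u x))) (circ (arg (u x))) = 0)
    (hη : DifferentiableAt ℝ η ‖u x‖) (hu : DifferentiableAt ℝ u x) (hux : u x ≠ 0) :
    divergence (radialExtension η φ ∘ u) x =
      fderiv ℝ (fun y => 1 - ‖u y‖ ^ 2) x (productionField η φ φ' (u x)) +
        η ‖u x‖ / ‖u x‖ * tangentialSpeed φ' (arg (u x)) * divergence u x := by
  have hr : ‖u x‖ ≠ 0 := norm_ne_zero_iff.mpr hux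
  have htangential : ⟪I * u x, fderiv ℝ u x (φ' (arg (u x)))⟫_ℝ =
      tangentialSpeed φ' (arg (u x)) *
        (‖u x‖ * divergence u x - ⟪u x, fderiv ℝ u x (circ (arg (u x)))⟫_ℝ) := by
    rw [divergence_eq_trace]
    exact inner_I_mul_map_of_dotR_circ_arg_eq_zero (fderiv ℝ u x : ℂ →ₗ[ℝ] ℂ) hent
  rw [divergence_radialExtension_comp hη hφ hper hu hux, htangential,
    fderiv_one_sub_norm_sq_apply hu, productionField, map_sub, map_smul, map_smul, inner_sub_right,
    real_inner_smul_right, real_inner_smul_right]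
  field_simp
  ring

end EntropyProduction

theorem statement7 (φ φ' : ℝ → ℂ) (hφd : ∀ θ, HasDerivAt φ (φ' θ) θ)
    (hLip : ∃ L : ℝ≥0, LipschitzWith L φ') (hper : ∀ θ, φ (θ + 2*π) = φ θ)
    (hent : ∀ θ, dotR (φ' θ) (circ θ) = 0)
    (η : ℝ → ℝ) (hη : ContDiff ℝ 2 η) (hηc : HasCompactSupport η)
    (hηsupp : tsupport η ⊆ Set.Ioi 0) (hη1 : η 1 = 1)
    (Ω : Set ℂ) (hΩ : IsOpen Ω) (u : ℂ → ℂ) (hu : ContDiffOn ℝ 1 u Ω)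
    (hu0 : ∀ x ∈ Ω, u x ≠ 0)
    (hdiv : ∀ x ∈ Ω, (fderiv ℝ u x 1).re + (fderiv ℝ u x Complex.I).im = 0) :
    ∀ x ∈ Ω,
      (fderiv ℝ (fun y => (η ‖u y‖) • φ (Complex.arg (u y))) x 1).re
        + (fderiv ℝ (fun y => (η ‖u y‖) • φ (Complex.arg (u y))) x Complex.I).im
      = fderiv ℝ (fun y => 1 - ‖u y‖^2) x
          ((η ‖u x‖ / (2 * ‖u x‖^2) * dotR (φ' (Complex.arg (u x)))
              (Complex.I * circ (Complex.arg (u x)))) • circ (Complex.arg (u x))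
            - (deriv η ‖u x‖ / (2 * ‖u x‖)) • φ (Complex.arg (u x))) := by
  intro x hx
  have hdu := (hu.contDiffAt (hΩ.mem_nhds hx)).differentiableAt one_ne_zero
  have hηr := hη.differentiable two_ne_zero ‖u x‖
  exact (statement7_general (hφd _) hper (hent _) hηr hdu (hu0 x hx)).trans <| by
    rw [show divergence u x = 0 from hdiv x hx, mul_zero, add_zero]
    rfl

end Eikonal
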